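/- Coercivity of the quadratic part of the energy (Proposition 2.4). Let n ≥ 1 be an integer, m > 0 and κ > 0. Then there exists a constant C > 0, depending only on m and κ (one may take C = min{1/2, 1/(1 + 2κm²)}), with the following property: for every continuously differentiable function U : ℝⁿ × [0,∞) → ℝ with compact support which satisfies the Poincaré inequality ∫₀^∞∫_{ℝⁿ} U(x,t)² dx dt ≤ κ ∫₀^∞∫_{ℝⁿ} |∇ₓU(x,t)|² dx dt, one has ∫₀^∞∫_{ℝⁿ} |∇U(x,t)|² dx dt + m² ∫₀^∞∫_{ℝⁿ} U(x,t)² dx dt − m ∫_{ℝⁿ} U(x,0)² dx ≥ C ∫₀^∞∫_{ℝⁿ} |∇U(x,t)|² dx dt. -/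

import Mathlib

/-!
Write `A = ∬ |∇ₓU|²`, `B = ∬ (∂ₜU)²`, `P = ∬ U²` and `Q = ∬ U ∂ₜU`. Integrating
`∂ₜ(U²) = 2 U ∂ₜU` over each vertical half-line gives the trace identity
`∫ U(x,0)² dx = -2 Q` (`trace_identity`). With `s = 1 - C`, expanding `0 ≤ ∬ (m U + s ∂ₜU)²`
gives `-2 m s Q ≤ m² P + s² B`, so that by `P ≤ κ A`
`s (A + B + m² P + 2 m Q) ≥ s A + s C B - C m² P ≥ s C (A + B) + (s² - C κ m²) A`.
The last coefficient is nonnegative because `C ≤ 1/2` and `C (1 + 2 κ m²) ≤ 1`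
(`coercivity_algebra`).

Since `U` is `C¹` only up to the boundary `t = 0`, the derivative of `U` is represented by
`fderivWithin` on the closed half-space, which is continuous there and agrees with the classical
partial derivatives for `t > 0`. All integrands are thus continuous on the closed half-space and
vanish off a compact set, whence integrability and Fubini.
-/


open MeasureTheory

noncomputable section

/-- Partial derivative of `U` in the `i`-th `x`-direction. -/
def pderivX {n : ℕ} (U : EuclideanSpace ℝ (Fin n) → ℝ → ℝ) (i : Fin n)
    (x : EuclideanSpace ℝ (Fin n)) (t : ℝ) : ℝ :=
  fderiv ℝ (fun y => U y t) x (EuclideanSpace.single i 1)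

/-- Partial derivative of `U` in the `t`-direction. -/
def pderivT {n : ℕ} (U : EuclideanSpace ℝ (Fin n) → ℝ → ℝ)
    (x : EuclideanSpace ℝ (Fin n)) (t : ℝ) : ℝ :=
  deriv (U x) t

/-- `|∇ₓU|²`, the squared gradient of `U` in the `x`-variables only. -/
def gradSqX {n : ℕ} (U : EuclideanSpace ℝ (Fin n) → ℝ → ℝ)
    (x : EuclideanSpace ℝ (Fin n)) (t : ℝ) : ℝ :=
  ∑ i : Fin n, (pderivX U i x t) ^ 2

/-- `|∇U|²`, the squared full gradient of `U` in the `n+1` variables `(x,t)`. -/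
def gradSqFull {n : ℕ} (U : EuclideanSpace ℝ (Fin n) → ℝ → ℝ)
    (x : EuclideanSpace ℝ (Fin n)) (t : ℝ) : ℝ :=
  gradSqX U x t + (pderivT U x t) ^ 2

/-- The closed half-space `ℝⁿ × [0,∞)`. -/
abbrev halfSpace (n : ℕ) : Set (EuclideanSpace ℝ (Fin n) × ℝ) := Set.univ ×ˢ Set.Ici (0:ℝ)

/-- The differential of `U` relative to the closed half-space, hence one-sided in `t` at `t = 0`. -/
def halfD {n : ℕ} (U : EuclideanSpace ℝ (Fin n) → ℝ → ℝ) (z : EuclideanSpace ℝ (Fin n) × ℝ) :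
    EuclideanSpace ℝ (Fin n) × ℝ →L[ℝ] ℝ :=
  fderivWithin ℝ (fun z : EuclideanSpace ℝ (Fin n) × ℝ => U z.1 z.2) (halfSpace n) z

lemma integrable_of_continuousOn_of_vanish {n : ℕ} {f : EuclideanSpace ℝ (Fin n) × ℝ → ℝ}
    {R T : ℝ} (hf : ContinuousOn f (halfSpace n))
    (h0 : ∀ z : EuclideanSpace ℝ (Fin n) × ℝ, (R < ‖z.1‖ ∨ T < z.2) → f z = 0) :
    Integrable f ((volume : Measure (EuclideanSpace ℝ (Fin n))).prod
      (volume.restrict (Set.Ioi (0:ℝ)))) := by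
  have hμ : ((volume : Measure (EuclideanSpace ℝ (Fin n))).prod
      (volume.restrict (Set.Ioi (0:ℝ)))) =
      (volume : Measure (EuclideanSpace ℝ (Fin n) × ℝ)).restrict (Set.univ ×ˢ Set.Ioi 0) := by
    rw [Measure.volume_eq_prod, ← Measure.prod_restrict, Measure.restrict_univ]
  rw [hμ]
  have hK : IsCompact
      (Metric.closedBall (0 : EuclideanSpace ℝ (Fin n)) R ×ˢ Set.Icc (0:ℝ) T) :=
    (isCompact_closedBall 0 R).prod isCompact_Icc
  have hint : IntegrableOn f
      (Metric.closedBall (0 : EuclideanSpace ℝ (Fin n)) R ×ˢ Set.Icc (0:ℝ) T) volume :=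
    (hf.mono (Set.prod_mono (Set.subset_univ _) Set.Icc_subset_Ici_self)).integrableOn_compact hK
  refine hint.of_forall_sdiff_eq_zero (MeasurableSet.univ.prod measurableSet_Ioi) ?_
  rintro ⟨x, t⟩ ⟨⟨-, ht⟩, hnot⟩
  apply h0
  by_contra! hcon
  exact hnot ⟨by simpa using hcon.1, le_of_lt ht, hcon.2⟩

lemma continuousOn_halfD {n : ℕ} {U : EuclideanSpace ℝ (Fin n) → ℝ → ℝ}
    (hU : ContDiffOn ℝ 1 (fun z : EuclideanSpace ℝ (Fin n) × ℝ => U z.1 z.2) (halfSpace n)) :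
    ContinuousOn (halfD U) (halfSpace n) :=
  hU.continuousOn_fderivWithin (uniqueDiffOn_univ.prod (uniqueDiffOn_Ici 0)) le_rfl

lemma halfD_eq_zero {n : ℕ} {U : EuclideanSpace ℝ (Fin n) → ℝ → ℝ} {R T : ℝ}
    (hsupp : ∀ (x : EuclideanSpace ℝ (Fin n)) (t : ℝ), (R ≤ ‖x‖ ∨ T ≤ t) → U x t = 0)
    (z : EuclideanSpace ℝ (Fin n) × ℝ) (hz : R < ‖z.1‖ ∨ T < z.2) : halfD U z = 0 := by
  have hev : ∀ᶠ w : EuclideanSpace ℝ (Fin n) × ℝ in nhds z, R < ‖w.1‖ ∨ T < w.2 :=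
    ((isOpen_lt continuous_const continuous_fst.norm).union
      (isOpen_lt continuous_const continuous_snd)).mem_nhds hz
  have hEq : (fun w : EuclideanSpace ℝ (Fin n) × ℝ => U w.1 w.2) =ᶠ[nhds z] fun _ => (0:ℝ) := by
    filter_upwards [hev] with w hw
    exact hsupp _ _ (hw.imp le_of_lt le_of_lt)
  unfold halfD
  rw [(hEq.filter_mono nhdsWithin_le_nhds).fderivWithin_eq hEq.self_of_nhds]
  simp

lemma hasFDerivAt_halfD {n : ℕ} {U : EuclideanSpace ℝ (Fin n) → ℝ → ℝ}
    (hU : ContDiffOn ℝ 1 (fun z : EuclideanSpace ℝ (Fin n) × ℝ => U z.1 z.2) (halfSpace n))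
    (x : EuclideanSpace ℝ (Fin n)) {t : ℝ} (ht : 0 < t) :
    HasFDerivAt (fun z : EuclideanSpace ℝ (Fin n) × ℝ => U z.1 z.2) (halfD U (x, t)) (x, t) := by
  have hmem : halfSpace n ∈ nhds (x, t) := prod_mem_nhds Filter.univ_mem (Ici_mem_nhds ht)
  exact ((hU.differentiableOn one_ne_zero) (x, t) ⟨trivial, ht.le⟩).hasFDerivWithinAt.hasFDerivAt
    hmem

lemma pderivX_eq {n : ℕ} {U : EuclideanSpace ℝ (Fin n) → ℝ → ℝ}
    (hU : ContDiffOn ℝ 1 (fun z : EuclideanSpace ℝ (Fin n) × ℝ => U z.1 z.2) (halfSpace n))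
    (i : Fin n) (x : EuclideanSpace ℝ (Fin n)) {t : ℝ} (ht : 0 < t) :
    pderivX U i x t = halfD U (x, t) (EuclideanSpace.single i 1, 0) := by
  have h : HasFDerivAt (fun y => U y t)
      ((halfD U (x, t)).comp (ContinuousLinearMap.inl ℝ (EuclideanSpace ℝ (Fin n)) ℝ)) x :=
    HasFDerivAt.comp (f := fun y => (y, t)) x (hasFDerivAt_halfD hU x ht)
      (hasFDerivAt_prodMk_left x t)
  unfold pderivX
  rw [h.fderiv]
  simp

lemma hasDerivAt_halfD {n : ℕ} {U : EuclideanSpace ℝ (Fin n) → ℝ → ℝ}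
    (hU : ContDiffOn ℝ 1 (fun z : EuclideanSpace ℝ (Fin n) × ℝ => U z.1 z.2) (halfSpace n))
    (x : EuclideanSpace ℝ (Fin n)) {t : ℝ} (ht : 0 < t) :
    HasDerivAt (U x) (halfD U (x, t) (0, 1)) t := by
  have h : HasFDerivAt (fun s => U x s)
      ((halfD U (x, t)).comp (ContinuousLinearMap.inr ℝ (EuclideanSpace ℝ (Fin n)) ℝ)) t :=
    HasFDerivAt.comp (f := fun s => (x, s)) t (hasFDerivAt_halfD hU x ht)
      (hasFDerivAt_prodMk_right x t)
  simpa using h.hasDerivAt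

/-- The trace at `t = 0` in terms of a bulk integral: `∫ U(x,0)² dx = -2 ∬ U ∂ₜU`. -/
lemma trace_identity {n : ℕ} {U : EuclideanSpace ℝ (Fin n) → ℝ → ℝ} {R T : ℝ}
    (hU : ContDiffOn ℝ 1 (fun z : EuclideanSpace ℝ (Fin n) × ℝ => U z.1 z.2) (halfSpace n))
    (hsupp : ∀ (x : EuclideanSpace ℝ (Fin n)) (t : ℝ), (R ≤ ‖x‖ ∨ T ≤ t) → U x t = 0)
    (hint : Integrable (fun z => U z.1 z.2 * halfD U z (0, 1))
      ((volume : Measure (EuclideanSpace ℝ (Fin n))).prod (volume.restrict (Set.Ioi (0:ℝ))))) :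
    ∫ x, (U x 0) ^ 2 = -2 * ∫ z, U z.1 z.2 * halfD U z (0, 1)
      ∂((volume : Measure (EuclideanSpace ℝ (Fin n))).prod
        (volume.restrict (Set.Ioi (0:ℝ)))) := by
  rw [integral_prod _ hint, ← integral_const_mul]
  refine integral_congr_ae ?_
  filter_upwards [hint.prod_right_ae] with x hx
  have hcont : ContinuousWithinAt (fun t => U x t ^ 2) (Set.Ici 0) 0 := by
    have h1 : ContinuousOn (fun t : ℝ => U x t) (Set.Ici 0) :=
      hU.continuousOn.comp (f := fun t : ℝ => (x, t)) (by fun_prop)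
        (fun t ht => ⟨trivial, ht⟩)
    exact (h1 0 Set.self_mem_Ici).pow 2
  have hder : ∀ t ∈ Set.Ioi (0:ℝ),
      HasDerivAt (fun t => U x t ^ 2) (2 * (U x t * halfD U (x, t) (0, 1))) t := by
    intro t ht
    exact ((hasDerivAt_halfD hU x ht).fun_pow 2).congr_deriv (by push_cast; ring)
  have hlim : Filter.Tendsto (fun t => U x t ^ 2) Filter.atTop (nhds 0) := by
    refine tendsto_const_nhds.congr' ?_
    filter_upwards [Filter.eventually_ge_atTop T] with t ht
    simp [hsupp x t (Or.inr ht)]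
  have key := integral_Ioi_of_hasDerivAt_of_tendsto hcont hder (hx.const_mul 2) hlim
  rw [integral_const_mul] at key
  linarith

/-- Here `0 ≤ m² P + 2 m s Q + s² B`, with `s = 1 - C`, is the expansion of
`0 ≤ ∬ (m U + s ∂ₜU)²`. -/
lemma coercivity_algebra {m κ A B P Q C : ℝ} (hC : 0 < C)
    (hC1 : C ≤ 1 / 2) (hC2 : C * (1 + 2 * κ * m ^ 2) ≤ 1) (hA : 0 ≤ A)
    (hP : P ≤ κ * A)
    (hsq : 0 ≤ m ^ 2 * P + 2 * m * (1 - C) * Q + (1 - C) ^ 2 * B) :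
    C * (A + B) ≤ A + B + m ^ 2 * P - m * (-2 * Q) := by
  have hs : 0 < 1 - C := by linarith
  have hcoef : C * κ * m ^ 2 ≤ (1 - C) ^ 2 := by nlinarith
  have h1 : C * m ^ 2 * P ≤ C * m ^ 2 * (κ * A) :=
    mul_le_mul_of_nonneg_left hP (by positivity)
  have h2 : C * κ * m ^ 2 * A ≤ (1 - C) ^ 2 * A := mul_le_mul_of_nonneg_right hcoef hA
  refine le_of_mul_le_mul_left ?_ hs
  nlinarith

/-- **Coercivity of the quadratic part of the energy** (Proposition 2.4). -/
theorem coercivity_quadratic_part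
    {n : ℕ} (hn : 1 ≤ n) (m κ : ℝ) (hm : 0 < m) (hκ : 0 < κ) :
    ∃ C : ℝ, 0 < C ∧ C = min (1/2) (1 / (1 + 2 * κ * m ^ 2)) ∧
      ∀ U : EuclideanSpace ℝ (Fin n) → ℝ → ℝ,
        ContDiffOn ℝ 1 (fun z : EuclideanSpace ℝ (Fin n) × ℝ => U z.1 z.2)
          ((Set.univ : Set (EuclideanSpace ℝ (Fin n))) ×ˢ Set.Ici (0:ℝ)) →
        (∃ R > (0:ℝ), ∃ T > (0:ℝ),
          ∀ (x : EuclideanSpace ℝ (Fin n)) (t : ℝ), (R ≤ ‖x‖ ∨ T ≤ t) → U x t = 0) →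
        (∫ t in Set.Ioi (0:ℝ), ∫ x, (U x t) ^ 2) ≤
          κ * ∫ t in Set.Ioi (0:ℝ), ∫ x, gradSqX U x t →
        (∫ t in Set.Ioi (0:ℝ), ∫ x, gradSqFull U x t) +
            m ^ 2 * (∫ t in Set.Ioi (0:ℝ), ∫ x, (U x t) ^ 2) -
            m * (∫ x, (U x 0) ^ 2) ≥
          C * ∫ t in Set.Ioi (0:ℝ), ∫ x, gradSqFull U x t := by
  have hden : 0 < 1 + 2 * κ * m ^ 2 := by positivity
  have hCpos : 0 < min (1/2) (1 / (1 + 2 * κ * m ^ 2)) := lt_min (by norm_num) (by positivity)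
  refine ⟨_, hCpos, rfl, ?_⟩
  rintro U hU ⟨R, -, T, -, hsupp⟩ hPoinc
  set C := min (1/2) (1 / (1 + 2 * κ * m ^ 2)) with hCdef
  have hC1 : C ≤ 1 / 2 := min_le_left _ _
  have hC2 : C * (1 + 2 * κ * m ^ 2) ≤ 1 := (le_div_iff₀ hden).1 (min_le_right _ _)
  have hu := hU.continuousOn
  have hD := continuousOn_halfD hU
  have hu0 : ∀ z : EuclideanSpace ℝ (Fin n) × ℝ, (R < ‖z.1‖ ∨ T < z.2) → U z.1 z.2 = 0 :=
    fun z hz => hsupp _ _ (hz.imp le_of_lt le_of_lt)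
  have hD0 := halfD_eq_zero hsupp
  have hDv : ∀ v, ContinuousOn (fun z => halfD U z v) (halfSpace n) :=
    fun v => hD.clm_apply continuousOn_const
  set μ := (volume : Measure (EuclideanSpace ℝ (Fin n))).prod
    (volume.restrict (Set.Ioi (0:ℝ))) with hμ
  have iP : Integrable (fun z => U z.1 z.2 ^ 2) μ :=
    integrable_of_continuousOn_of_vanish (R := R) (T := T) (hu.pow 2)
      (fun z hz => by simp [hu0 z hz])
  have iQ : Integrable (fun z => U z.1 z.2 * halfD U z (0, 1)) μ :=
    integrable_of_continuousOn_of_vanish (R := R) (T := T) (hu.mul (hDv _))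
      (fun z hz => by simp [hu0 z hz])
  have iB : Integrable (fun z => halfD U z (0, 1) ^ 2) μ :=
    integrable_of_continuousOn_of_vanish (R := R) (T := T) ((hDv _).pow 2)
      (fun z hz => by simp [hD0 z hz])
  have iA : Integrable
      (fun z => ∑ i : Fin n, halfD U z (EuclideanSpace.single i 1, 0) ^ 2) μ :=
    integrable_of_continuousOn_of_vanish (R := R) (T := T)
      (continuousOn_finsetSum _ fun i _ => (hDv _).pow 2)
      (fun z hz => by simp [hD0 z hz])
  have eP : (∫ t in Set.Ioi (0:ℝ), ∫ x, (U x t) ^ 2) = ∫ z, U z.1 z.2 ^ 2 ∂μ :=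
    (integral_prod_symm _ iP).symm
  have gX : ∀ x t, 0 < t → gradSqX U x t =
      ∑ i : Fin n, halfD U (x, t) (EuclideanSpace.single i 1, 0) ^ 2 := fun x t ht => by
    simp only [gradSqX, pderivX_eq hU _ x ht]
  have eA : (∫ t in Set.Ioi (0:ℝ), ∫ x, gradSqX U x t) =
      ∫ z, ∑ i : Fin n, halfD U z (EuclideanSpace.single i 1, 0) ^ 2 ∂μ := by
    rw [integral_prod_symm _ iA]
    refine setIntegral_congr_fun measurableSet_Ioi fun t ht => ?_
    simp only [gX _ t ht]
  have eF : (∫ t in Set.Ioi (0:ℝ), ∫ x, gradSqFull U x t) =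
      (∫ z, ∑ i : Fin n, halfD U z (EuclideanSpace.single i 1, 0) ^ 2 ∂μ) +
        ∫ z, halfD U z (0, 1) ^ 2 ∂μ := by
    have iAB : Integrable (fun z => ∑ i : Fin n, halfD U z (EuclideanSpace.single i 1, 0) ^ 2 +
        halfD U z (0, 1) ^ 2) μ := iA.add iB
    rw [← integral_add iA iB, integral_prod_symm _ iAB]
    refine setIntegral_congr_fun measurableSet_Ioi fun t ht => ?_
    simp only [gradSqFull, gX _ t ht, pderivT, (hasDerivAt_halfD hU _ ht).deriv]
  have hsq : 0 ≤ m ^ 2 * (∫ z, U z.1 z.2 ^ 2 ∂μ) +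
      2 * m * (1 - C) * (∫ z, U z.1 z.2 * halfD U z (0, 1) ∂μ) +
      (1 - C) ^ 2 * ∫ z, halfD U z (0, 1) ^ 2 ∂μ := by
    have iPQ : Integrable (fun z => m ^ 2 * U z.1 z.2 ^ 2 +
        2 * m * (1 - C) * (U z.1 z.2 * halfD U z (0, 1))) μ :=
      (iP.const_mul _).add (iQ.const_mul _)
    rw [← integral_const_mul, ← integral_const_mul, ← integral_const_mul,
      ← integral_add (iP.const_mul _) (iQ.const_mul _),
      ← integral_add iPQ (iB.const_mul _)]
    refine integral_nonneg fun z => ?_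
    have := sq_nonneg (m * U z.1 z.2 + (1 - C) * halfD U z (0, 1))
    simp only [Pi.zero_apply]
    linarith
  rw [eP, eA] at hPoinc
  rw [eP, eF, trace_identity hU hsupp iQ]
  exact coercivity_algebra hCpos hC1 hC2
    (integral_nonneg fun z => Finset.sum_nonneg fun i _ => sq_nonneg _) hPoinc hsq
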